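/- arXiv:1405.6866 — 2 statements merged into one kernel-verified Lean document; each statement's English description precedes it below -/
import Mathlib

section
/- There exists a Polish space X such that: (i) Cantor space {0,1}^ℕ (with product topology) topologically embeds into X; (ii) X is not σ-embeddable into Cantor space {0,1}^ℕ; and (iii) the Hilbert cube [0,1]^ℕ is not σ-embeddable into X. In particular, the σ-homeomorphism type of X lies strictly between those of Cantor space and the Hilbert cube, so not every uncountable Polish space is σ-homeomorphic to Cantor space or to the Hilbert cube. -/
/-!
Let `Z` be a closed subset of `(ℕ → Bool) × [0,1]^ℕ` such that every closed set has the same section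
as `Z` over some point `c`. Then `X` is the set of those points of `Z` which are lexicographically
least in their section; it is a `Gδ` set, hence Polish.

If `X` were a countable union of zero-dimensional sets, there would be, for every `n`, a partition
between the faces `q n = 0` and `q n = 1` missing the `n`-th set. The intersection of these
partitions is closed, so its section over some `c` is that of `Z`. This section is nonempty, because
the pairs of opposite faces of the cube are essential, and its least point belongs to `X` but to
none of the countably many sets. The Cantor space embeds into `X` because `X` is uncountable.

On the other hand, the first projection is a continuous injection of `X` into `ℕ → Bool`, and the
cube is not a countable union of sets admitting such an injection: there is a decreasing sequence of
closed sets, each essential for infinitely many pairs of opposite faces, the `n`-th of which avoids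
the `n`-th set of a given cover. For the step from `K`, separate the preimages of `0` and `1` under
the `i`-th bit of the injection by open sets with union `O i`. Either some `K \ O i`, which misses
the `n`-th set, is essential for infinitely many pairs, or `K` contains such a set that is closed
and lies in all the `O i`. In the latter case that set can be taken connected; then every bit is
constant on it, so it meets the `n`-th set in at most one point, which a further partition removes.

That the faces of the finite-dimensional cube are essential is a cubical form of Sperner's lemma.
The partitions label the vertices of a fine grid mod 2, and the cup product of the coboundaries of
these labels has sum `1` over all top-dimensional cubes, hence is nonzero on one of them; this cube
meets both sides of every partition.
-/

open Set

/-- `X` is σ-embeddable into `Y`: `X` is a countable union of subsets each of which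
(with the subspace topology) is homeomorphic to a subspace of `Y`. -/
def SigmaEmbeddable (X : Type*) (Y : Type*) [TopologicalSpace X] [TopologicalSpace Y] : Prop :=
  ∃ A : ℕ → Set X, (⋃ n, A n) = univ ∧ ∀ n, ∃ B : Set Y, Nonempty (↥(A n) ≃ₜ ↥B)

section GridCochain

variable {ι : Type*} [DecidableEq ι]

/-- Mod 2 cubical cochains on the lattice `ℕ^ι`: `ω I p` is the value of `ω` on the cube with lowest
vertex `p` and edges in the directions `I`. Coefficients mod 2 make orientations unnecessary. -/
abbrev GridCochain (ι : Type*) : Type _ := Finset ι → (ι → ℕ) → ZMod 2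

namespace GridCochain

/-- The coboundary of a cubical cochain: the sum of its values over all facets of the cube. -/
def coboundary (ω : GridCochain ι) : GridCochain ι := fun I p =>
  ∑ i ∈ I, (ω (I.erase i) (p + Pi.single i 1) + ω (I.erase i) p)

lemma coboundary_coboundary (ω : GridCochain ι) (I : Finset ι) (p : ι → ℕ) :
    coboundary (coboundary ω) I p = 0 := by
  let h : ι → ι → ZMod 2 := fun i j =>
    ω ((I.erase i).erase j) (p + Pi.single i 1 + Pi.single j 1) +
      ω ((I.erase i).erase j) (p + Pi.single i 1) +
      (ω ((I.erase i).erase j) (p + Pi.single j 1) + ω ((I.erase i).erase j) p)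
  have h_symm (i j : ι) : h i j = h j i := by
    simp only [h, Finset.erase_right_comm (a := i), add_right_comm p (Pi.single i 1)]
    ring
  have h_sum : coboundary (coboundary ω) I p = ∑ x ∈ I.sigma fun i => I.erase i, h x.1 x.2 := by
    simp only [coboundary, h, Finset.sum_sigma, Finset.sum_add_distrib]
  rw [h_sum]
  refine Finset.sum_involution (fun x _ => ⟨x.2, x.1⟩) (fun x _ => ?_) (fun x hx _ => ?_)
    (fun x hx => ?_) fun x _ => rfl
  · rw [h_symm, CharTwo.add_self_eq_zero]
  · simp only [Finset.mem_sigma, Finset.mem_erase] at hx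
    exact fun hxx => hx.2.1 (congrArg Sigma.fst hxx)
  · simp only [Finset.mem_sigma, Finset.mem_erase] at hx ⊢
    exact ⟨hx.2.2, hx.2.1.symm, hx.1⟩

/-- The iterated cup product `δ(s i₁) ⌣ ⋯ ⌣ δ(s iₖ)` of the coboundaries of vertex labels, for
`L = [i₁, …, iₖ]`. It is written as the coboundary of `s i₁ ⌣ δ(s i₂) ⌣ ⋯ ⌣ δ(s iₖ)`;
`labelCup_cons_apply` is the usual product formula. -/
def labelCup (s : ι → (ι → ℕ) → ZMod 2) : List ι → GridCochain ι
  | [] => fun I _ => if I = ∅ then 1 else 0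
  | i :: L => coboundary fun I p => s i p * labelCup s L I p

lemma coboundary_labelCup (s : ι → (ι → ℕ) → ZMod 2) (L : List ι) (I : Finset ι) (p : ι → ℕ) :
    coboundary (labelCup s L) I p = 0 := by
  cases L with
  | nil => simp only [coboundary, labelCup, CharTwo.add_self_eq_zero, Finset.sum_const_zero]
  | cons i L => exact coboundary_coboundary _ I p

lemma labelCup_cons_apply (s : ι → (ι → ℕ) → ZMod 2) (i : ι) (L : List ι) (I : Finset ι)
    (p : ι → ℕ) :
    labelCup s (i :: L) I p = ∑ j ∈ I, (s i (p + Pi.single j 1) + s i p) *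
      labelCup s L (I.erase j) (p + Pi.single j 1) := by
  calc labelCup s (i :: L) I p
      = labelCup s (i :: L) I p + s i p * coboundary (labelCup s L) I p := by
        rw [coboundary_labelCup, mul_zero, add_zero]
    _ = _ := by
        simp only [labelCup, coboundary, Finset.mul_sum]
        rw [← Finset.sum_add_distrib]
        refine Finset.sum_congr rfl fun j _ => ?_
        linear_combination CharTwo.add_self_eq_zero (s i p * labelCup s L (I.erase j) p)

/-- The vertices of the cube with lowest vertex `p` and edges in the directions `I`. -/
def cubeVertices (I : Finset ι) (p : ι → ℕ) : Set (ι → ℕ) :=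
  {q | ∀ j, q j = p j ∨ j ∈ I ∧ q j = p j + 1}

lemma add_single_mem_cubeVertices {I : Finset ι} {j : ι} (hj : j ∈ I) (p : ι → ℕ) :
    p + Pi.single j 1 ∈ cubeVertices I p := by
  intro k
  rcases eq_or_ne k j with rfl | hkj
  · simp [hj]
  · simp [hkj]

lemma cubeVertices_erase_subset {I : Finset ι} {j : ι} (hj : j ∈ I) (p : ι → ℕ) :
    cubeVertices (I.erase j) (p + Pi.single j 1) ⊆ cubeVertices I p := by
  intro q hq k
  have := hq k
  rcases eq_or_ne k j with rfl | hkj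
  · simp_all
  · simp_all

lemma labelCup_eq_zero (s : ι → (ι → ℕ) → ZMod 2) {L : List ι} {k : ι} (hk : k ∈ L) {I : Finset ι}
    {p : ι → ℕ} (h : ∀ q ∈ cubeVertices I p, s k q = s k p) : labelCup s L I p = 0 := by
  induction L generalizing I p with
  | nil => exact absurd hk List.not_mem_nil
  | cons i L ih =>
    rw [labelCup_cons_apply]
    refine Finset.sum_eq_zero fun j hj => ?_
    have hstep : s k (p + Pi.single j 1) = s k p := h _ (add_single_mem_cubeVertices hj p)
    rcases List.mem_cons.1 hk with rfl | hkL
    · rw [hstep, CharTwo.add_self_eq_zero, zero_mul]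
    · rw [ih hkL fun q hq => (h q (cubeVertices_erase_subset hj p hq)).trans hstep.symm, mul_zero]

variable [Fintype ι]

/-- The lowest vertices of the unit cubes with directions `J` in the slice of the grid
`{0, …, N}^ι` on which the coordinates outside `J` are those of `c`. -/
def box (N : ℕ) (J : Finset ι) (c : ι → ℕ) : Finset (ι → ℕ) :=
  Fintype.piFinset fun j => if j ∈ J then Finset.range N else {c j}

lemma mem_box {N : ℕ} {J : Finset ι} {c p : ι → ℕ} :
    p ∈ box N J c ↔ ∀ j, if j ∈ J then p j < N else p j = c j := by
  simp only [box, Fintype.mem_piFinset]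
  refine forall_congr' fun j => ?_
  split_ifs <;> simp

lemma sum_box {N : ℕ} {I : Finset ι} {i : ι} (hi : i ∈ I) (c : ι → ℕ) (f : (ι → ℕ) → ZMod 2) :
    ∑ p ∈ box N I c, f p =
      ∑ t ∈ Finset.range N, ∑ p ∈ box N (I.erase i) (Function.update c i t), f p := by
  rw [← Finset.sum_fiberwise_of_maps_to (g := fun p => p i) (t := Finset.range N)
    fun p hp => by simpa [hi] using mem_box.1 hp i]
  refine Finset.sum_congr rfl fun t ht => Finset.sum_congr ?_ fun _ _ => rfl
  ext p
  simp only [Finset.mem_filter, mem_box]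
  constructor
  · rintro ⟨hp, rfl⟩ j
    rcases eq_or_ne j i with rfl | hji
    · simp
    · simpa [hji] using hp j
  · intro hp
    have hpi : p i = t := by simpa using hp i
    refine ⟨fun j => ?_, hpi⟩
    rcases eq_or_ne j i with rfl | hji
    · simpa [hi, hpi] using ht
    · simpa [hji] using hp j

lemma sum_box_add_single {N : ℕ} {J : Finset ι} {i : ι} (hi : i ∉ J) (c : ι → ℕ) (t : ℕ)
    (f : (ι → ℕ) → ZMod 2) :
    ∑ p ∈ box N J (Function.update c i t), f (p + Pi.single i 1) =
      ∑ p ∈ box N J (Function.update c i (t + 1)), f p := by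
  refine Finset.sum_nbij' (fun p => p + Pi.single i 1) (fun p => Function.update p i t)
    (fun p hp => mem_box.2 fun j => ?_) (fun p hp => mem_box.2 fun j => ?_)
    (fun p hp => funext fun j => ?_) (fun p hp => funext fun j => ?_) fun _ _ => rfl
  all_goals
    have hpj := mem_box.1 hp j
    rcases eq_or_ne j i with rfl | hji
    · simp_all
    · simp_all

/-- Summing over a box, the values on interior facets cancel in pairs. -/
lemma sum_box_coboundary (N : ℕ) (ω : GridCochain ι) (I : Finset ι) (c : ι → ℕ) :
    ∑ p ∈ box N I c, coboundary ω I p =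
      ∑ i ∈ I, (∑ p ∈ box N (I.erase i) (Function.update c i N), ω (I.erase i) p +
        ∑ p ∈ box N (I.erase i) (Function.update c i 0), ω (I.erase i) p) := by
  simp only [coboundary]
  rw [Finset.sum_comm]
  refine Finset.sum_congr rfl fun i hi => ?_
  rw [sum_box hi]
  simp only [Finset.sum_add_distrib, sum_box_add_single (Finset.notMem_erase i I)]
  rw [← Finset.sum_add_distrib]
  simp only [← CharTwo.sub_eq_add]
  exact Finset.sum_range_sub
    (fun t => ∑ p ∈ box N (I.erase i) (Function.update c i t), ω (I.erase i) p) N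

/-- On a facet of the box in a direction `k ∈ L`, the label `s k` is constant. -/
lemma sum_box_labelCup_eq_zero {N : ℕ} (s : ι → (ι → ℕ) → ZMod 2) {L : List ι} {k : ι} (hk : k ∈ L)
    {J : Finset ι} (hkJ : k ∉ J) {c : ι → ℕ} (hs : ∀ p q, p k = c k → q k = c k → s k p = s k q)
    (f : (ι → ℕ) → ZMod 2) : ∑ p ∈ box N J c, f p * labelCup s L J p = 0 := by
  refine Finset.sum_eq_zero fun p hp => ?_
  have hpk : p k = c k := by simpa [hkJ] using mem_box.1 hp k
  rw [labelCup_eq_zero s hk fun q hq => ?_, mul_zero]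
  refine hs q p ?_ hpk
  have := hq k
  simp_all

lemma sum_box_labelCup {N : ℕ} {s : ι → (ι → ℕ) → ZMod 2} {L : List ι} (hL : L.Nodup)
    (h0 : ∀ i ∈ L, ∀ p, p i = 0 → s i p = 0) (h1 : ∀ i ∈ L, ∀ p, p i = N → s i p = 1) (c : ι → ℕ) :
    ∑ p ∈ box N L.toFinset c, labelCup s L L.toFinset p = 1 := by
  induction L generalizing c with
  | nil =>
    have : box N ∅ c = {c} := by
      ext p
      simp [mem_box, funext_iff]
    simp [this, labelCup]
  | cons i L ih =>
    obtain ⟨hiL, hL⟩ := List.nodup_cons.1 hL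
    simp only [List.forall_mem_cons] at h0 h1
    rw [List.toFinset_cons, labelCup, sum_box_coboundary, Finset.sum_insert (by simpa using hiL),
      Finset.erase_insert (by simpa using hiL)]
    have hbox {t : ℕ} {p : ι → ℕ} (hp : p ∈ box N L.toFinset (Function.update c i t)) :
        p i = t := by
      simpa [hiL] using mem_box.1 hp i
    have htop : ∑ p ∈ box N L.toFinset (Function.update c i N),
        s i p * labelCup s L L.toFinset p = 1 := by
      rw [← ih hL h0.2 h1.2 (Function.update c i N)]
      exact Finset.sum_congr rfl fun p hp => by rw [h1.1 p (hbox hp), one_mul]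
    have hbot : ∑ p ∈ box N L.toFinset (Function.update c i 0),
        s i p * labelCup s L L.toFinset p = 0 :=
      Finset.sum_eq_zero fun p hp => by rw [h0.1 p (hbox hp), zero_mul]
    have hside : ∀ k ∈ L.toFinset, ∀ t, (t = 0 ∨ t = N) →
        ∑ p ∈ box N ((insert i L.toFinset).erase k) (Function.update c k t),
          s i p * labelCup s L ((insert i L.toFinset).erase k) p = 0 := by
      intro k hk t ht
      rw [List.mem_toFinset] at hk
      refine sum_box_labelCup_eq_zero s hk (Finset.notMem_erase k _) (fun p q hp hq => ?_) _
      rw [Function.update_self] at hp hq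
      rcases ht with rfl | rfl
      · rw [h0.2 k hk p hp, h0.2 k hk q hq]
      · rw [h1.2 k hk p hp, h1.2 k hk q hq]
    rw [htop, hbot, add_zero, Finset.sum_eq_zero, add_zero]
    intro k hk
    rw [hside k hk N (Or.inr rfl), hside k hk 0 (Or.inl rfl), add_zero]

end GridCochain

end GridCochain

theorem exists_cube_forall_label_ne {ι : Type*} [Finite ι] {N : ℕ} {s : ι → (ι → ℕ) → ZMod 2}
    (h0 : ∀ i p, p i = 0 → s i p = 0) (h1 : ∀ i p, p i = N → s i p = 1) :
    ∃ p, ∀ i, ∃ q, (∀ j, q j = p j ∨ q j = p j + 1) ∧ s i q ≠ s i p := by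
  classical
  have := Fintype.ofFinite ι
  have hsum := GridCochain.sum_box_labelCup (Finset.nodup_toList Finset.univ) (fun i _ => h0 i)
    (fun i _ => h1 i) 0
  obtain ⟨p, -, hp⟩ := Finset.exists_ne_zero_of_sum_ne_zero (hsum.trans_ne one_ne_zero)
  refine ⟨p, fun i => ?_⟩
  by_contra! hconst
  exact hp (GridCochain.labelCup_eq_zero s (by simp : i ∈ _) fun q hq =>
    hconst q fun j => (hq j).imp_right And.right)

section EssentialFaces

variable {ι : Type*} {K K₀ K₁ : Set (ι → unitInterval)} {E E' : Set ι} {e : ι}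

/-- `U` and `V` are disjoint open neighbourhoods of the opposite faces `q e = 0` and `q e = 1` of
the cube; the complement of `U ∪ V` is then a partition between these faces. -/
structure SeparatesFaces (e : ι) (U V : Set (ι → unitInterval)) : Prop where
  isOpen_left : IsOpen U
  isOpen_right : IsOpen V
  disjoint : Disjoint U V
  mem_left : ∀ q, q e = 0 → q ∈ U
  mem_right : ∀ q, q e = 1 → q ∈ V

lemma SeparatesFaces.isOpen_union {U V : Set (ι → unitInterval)} (h : SeparatesFaces e U V) :
    IsOpen (U ∪ V) :=
  h.isOpen_left.union h.isOpen_right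

lemma isOpen_biUnion_separatesFaces {U V : ι → Set (ι → unitInterval)}
    (h : ∀ e, SeparatesFaces e (U e) (V e)) (E : Set ι) : IsOpen (⋃ e ∈ E, U e ∪ V e) :=
  isOpen_biUnion fun e _ => (h e).isOpen_union

lemma separatesFaces_lt_gt {t : unitInterval} (ht : t ∈ Ioo 0 1) (e : ι) :
    SeparatesFaces e {q | q e < t} {q | t < q e} where
  isOpen_left := isOpen_lt (continuous_apply e) continuous_const
  isOpen_right := isOpen_lt continuous_const (continuous_apply e)
  disjoint := disjoint_left.2 fun q hq => (lt_asymm hq : ¬ t < q e)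
  mem_left _ hq := hq.trans_lt ht.1
  mem_right _ hq := ht.2.trans_eq hq.symm

lemma exists_separatesFaces (e : ι) : ∃ U V, SeparatesFaces e U V :=
  let ⟨_, ht⟩ := exists_between zero_lt_one
  ⟨_, _, separatesFaces_lt_gt ht e⟩

lemma SeparatesFaces.glue {U₀ V₀ U₁ V₁ O₀ O₁ : Set (ι → unitInterval)}
    (h₀ : SeparatesFaces e U₀ V₀) (h₁ : SeparatesFaces e U₁ V₁) (hO₀ : IsOpen O₀) (hO₁ : IsOpen O₁)
    (hO : Disjoint O₀ O₁) :
    SeparatesFaces e (U₀ ∩ O₀ ∪ U₁ ∩ O₁ ∪ U₀ ∩ U₁) (V₀ ∩ O₀ ∪ V₁ ∩ O₁ ∪ V₀ ∩ V₁) where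
  isOpen_left := ((h₀.isOpen_left.inter hO₀).union (h₁.isOpen_left.inter hO₁)).union
    (h₀.isOpen_left.inter h₁.isOpen_left)
  isOpen_right := ((h₀.isOpen_right.inter hO₀).union (h₁.isOpen_right.inter hO₁)).union
    (h₀.isOpen_right.inter h₁.isOpen_right)
  disjoint := by
    have hUV₀ := disjoint_left.1 h₀.disjoint
    have hUV₁ := disjoint_left.1 h₁.disjoint
    have hO' := disjoint_left.1 hO
    exact disjoint_left.2 fun q => by grind
  mem_left q hq := Or.inr ⟨h₀.mem_left q hq, h₁.mem_left q hq⟩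
  mem_right q hq := Or.inr ⟨h₀.mem_right q hq, h₁.mem_right q hq⟩

/-- The point of the cube with coordinates `p i / N`, truncated to the unit interval. -/
noncomputable def gridPoint (N : ℕ) (p : ι → ℕ) : ι → unitInterval :=
  fun i => projIcc 0 1 zero_le_one (p i / N : ℝ)

lemma gridPoint_eq_zero {N : ℕ} {p : ι → ℕ} {i : ι} (h : p i = 0) : gridPoint N p i = 0 := by
  simp [gridPoint, h]

lemma gridPoint_eq_one {N : ℕ} (hN : N ≠ 0) {p : ι → ℕ} {i : ι} (h : p i = N) :
    gridPoint N p i = 1 := by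
  simp [gridPoint, h, hN]

lemma dist_gridPoint_le [Fintype ι] (N : ℕ) {p q : ι → ℕ} (h : ∀ i, q i = p i ∨ q i = p i + 1) :
    dist (gridPoint N q) (gridPoint N p) ≤ 1 / N := by
  refine (dist_pi_le_iff (by positivity)).2 fun i => ?_
  refine (abs_projIcc_sub_projIcc zero_le_one).trans ?_
  rw [← sub_div, abs_div, Nat.abs_cast]
  gcongr
  rcases h i with h | h <;> simp [h]

theorem SeparatesFaces.iUnion_ne_univ [Finite ι] {U V : ι → Set (ι → unitInterval)}
    (h : ∀ e, SeparatesFaces e (U e) (V e)) : ⋃ e, U e ∪ V e ≠ univ := by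
  classical
  have := Fintype.ofFinite ι
  intro hcover
  obtain ⟨δ, hδ, hball⟩ := lebesgue_number_lemma_of_metric (c := Sum.elim U V)
    (isCompact_univ (X := ι → unitInterval))
    (Sum.rec (fun e => (h e).isOpen_left) fun e => (h e).isOpen_right)
    (by simp [iUnion_sum, ← iUnion_union_distrib, hcover])
  obtain ⟨N, hN⟩ := exists_nat_one_div_lt hδ
  let label (e : ι) (p : ι → ℕ) : ZMod 2 := if gridPoint (N + 1) p ∈ U e then 0 else 1
  obtain ⟨p, hp⟩ := exists_cube_forall_label_ne (s := label) (N := N + 1)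
    (fun e p hp => if_pos ((h e).mem_left _ (gridPoint_eq_zero hp)))
    (fun e p hp => if_neg (disjoint_right.1 (h e).disjoint
      ((h e).mem_right _ (gridPoint_eq_one N.succ_ne_zero hp))))
  obtain ⟨e | e, he⟩ := hball (gridPoint (N + 1) p) (mem_univ _)
  all_goals
    obtain ⟨q, hq, hne⟩ := hp e
    have hpe := he (Metric.mem_ball_self hδ)
    have hqe := he (Metric.mem_ball.2 ((dist_gridPoint_le (N + 1) hq).trans_lt (mod_cast hN)))
  · exact hne ((if_pos hqe).trans (if_pos hpe).symm)
  · have hV := disjoint_right.1 (h e).disjoint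
    exact hne ((if_neg (hV hqe)).trans (if_neg (hV hpe)).symm)

/-- The pairs of opposite faces in the directions of `E` are essential on `K`: one cannot choose
partitions between them that have no common point in `K`. -/
def EssentialOn (K : Set (ι → unitInterval)) (E : Set ι) : Prop :=
  ∀ U V : ι → Set (ι → unitInterval), (∀ e, SeparatesFaces e (U e) (V e)) →
    ¬ K ⊆ ⋃ e ∈ E, U e ∪ V e

lemma essentialOn_univ : EssentialOn (univ : Set (ι → unitInterval)) univ := by
  classical
  intro U V h hcover
  obtain ⟨t, ht⟩ := isCompact_univ.elim_finite_subcover (fun e => U e ∪ V e)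
    (fun e => (h e).isOpen_union) (by simpa using hcover)
  let extend (q : t → unitInterval) (e : ι) : unitInterval := if he : e ∈ t then q ⟨e, he⟩ else 0
  have hextend : Continuous extend := continuous_pi fun e => by
    by_cases he : e ∈ t
    · simpa [extend, he] using continuous_apply _
    · simpa [extend, he] using continuous_const
  have hface (q : t → unitInterval) (e : t) : extend q e = q e := dif_pos e.2
  refine SeparatesFaces.iUnion_ne_univ (U := fun e : t => extend ⁻¹' U e)
    (V := fun e : t => extend ⁻¹' V e) (fun e => ?_) (eq_univ_of_forall fun q => ?_)
  · exact {
      isOpen_left := (h e).isOpen_left.preimage hextend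
      isOpen_right := (h e).isOpen_right.preimage hextend
      disjoint := (h e).disjoint.preimage extend
      mem_left q hq := (h e).mem_left _ ((hface q e).trans hq)
      mem_right q hq := (h e).mem_right _ ((hface q e).trans hq) }
  · obtain ⟨e, he, hq⟩ := mem_iUnion₂.1 (ht (mem_univ (extend q)))
    exact mem_iUnion.2 ⟨⟨e, he⟩, hq⟩

namespace EssentialOn

lemma mono (h : EssentialOn K E) (hE : E' ⊆ E) : EssentialOn K E' := fun U V hUV hcover =>
  h U V hUV (hcover.trans (biUnion_subset_biUnion_left hE))

lemma nonempty (h : EssentialOn K E) : K.Nonempty := by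
  choose U V hUV using exists_separatesFaces (ι := ι)
  rw [nonempty_iff_ne_empty]
  rintro rfl
  exact h U V hUV (empty_subset _)

lemma sdiff (h : EssentialOn K E) (hE : E' ⊆ E) {U V : ι → Set (ι → unitInterval)}
    (hUV : ∀ e, SeparatesFaces e (U e) (V e)) :
    EssentialOn (K \ ⋃ e ∈ E', U e ∪ V e) (E \ E') := by
  classical
  intro U' V' hUV' hcover
  refine h (fun e => if e ∈ E' then U e else U' e) (fun e => if e ∈ E' then V e else V' e)
    (fun e => ?_) fun q hq => ?_
  · split_ifs
    exacts [hUV e, hUV' e]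
  · by_cases hq' : q ∈ ⋃ e ∈ E', U e ∪ V e
    · obtain ⟨e, he, hqe⟩ := mem_iUnion₂.1 hq'
      exact mem_iUnion₂.2 ⟨e, hE he, by simpa [he] using hqe⟩
    · obtain ⟨e, he, hqe⟩ := mem_iUnion₂.1 (hcover ⟨hq, hq'⟩)
      exact mem_iUnion₂.2 ⟨e, he.1, by simpa [he.2] using hqe⟩

lemma of_union (h : EssentialOn (K₀ ∪ K₁) E) (hK : SeparatedNhds K₀ K₁) :
    EssentialOn K₀ E ∨ EssentialOn K₁ E := by
  obtain ⟨O₀, O₁, hO₀, hO₁, hKO₀, hKO₁, hO⟩ := hK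
  by_contra! hcon
  simp only [EssentialOn, not_forall, not_not] at hcon
  obtain ⟨⟨U₀, V₀, hUV₀, hcover₀⟩, U₁, V₁, hUV₁, hcover₁⟩ := hcon
  refine h _ _ (fun e => (hUV₀ e).glue (hUV₁ e) hO₀ hO₁ hO) (union_subset ?_ ?_)
  · intro q hq
    obtain ⟨e, he, hqe⟩ := mem_iUnion₂.1 (hcover₀ hq)
    have := hKO₀ hq
    exact mem_iUnion₂.2 ⟨e, he, by grind⟩
  · intro q hq
    obtain ⟨e, he, hqe⟩ := mem_iUnion₂.1 (hcover₁ hq)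
    have := hKO₁ hq
    exact mem_iUnion₂.2 ⟨e, he, by grind⟩

lemma sInter {c : Set (Set (ι → unitInterval))} (hne : c.Nonempty) (hc : IsChain (· ⊆ ·) c)
    (hclosed : ∀ K ∈ c, IsClosed K) (h : ∀ K ∈ c, EssentialOn K E) : EssentialOn (⋂₀ c) E := by
  intro U V hUV hcover
  have := hne.to_subtype
  rw [sInter_eq_iInter] at hcover
  have hdir : Directed (· ⊇ ·) ((↑) : c → Set (ι → unitInterval)) := fun A B =>
    (hc.total A.2 B.2).elim (fun h => ⟨A, subset_rfl, h⟩) fun h => ⟨B, h, subset_rfl⟩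
  obtain ⟨⟨K, hK⟩, hKU⟩ := exists_subset_nhds_of_compactSpace hdir (fun K => hclosed K K.2)
    fun q hq => (isOpen_biUnion_separatesFaces hUV E).mem_nhds (hcover hq)
  exact h K hK U V hUV hKU

lemma exists_isPreconnected_subset (h : EssentialOn K E) (hK : IsClosed K) :
    ∃ M ⊆ K, IsClosed M ∧ IsPreconnected M ∧ EssentialOn M E := by
  obtain ⟨M, hMK, ⟨hM, hME⟩, hmin⟩ := zorn_superset_nonempty {M | IsClosed M ∧ EssentialOn M E}
    (fun c hcS hc hne => ⟨⋂₀ c, ⟨isClosed_sInter fun M hM => (hcS hM).1,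
      EssentialOn.sInter hne hc (fun M hM => (hcS hM).1) fun M hM => (hcS hM).2⟩,
      fun M hM => sInter_subset_of_mem hM⟩) K ⟨hK, h⟩
  refine ⟨M, hMK, hM, (isPreconnected_iff_subset_of_fully_disjoint_closed hM).2 ?_, hME⟩
  intro F G hF hG hMFG hFG
  rw [← inter_eq_left.2 hMFG, inter_union_distrib_left] at hME
  have hsep : SeparatedNhds (M ∩ F) (M ∩ G) := normal_separation (hM.inter hF) (hM.inter hG)
    (hFG.mono inter_subset_right inter_subset_right)
  refine (hME.of_union hsep).imp (fun h => ?_) fun h => ?_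
  · exact (hmin ⟨hM.inter hF, h⟩ inter_subset_left).trans inter_subset_right
  · exact (hmin ⟨hM.inter hG, h⟩ inter_subset_left).trans inter_subset_right

end EssentialOn

lemma exists_forall_infinite_fiber {α : Type*} {E : Set α} (hE : E.Infinite) :
    ∃ c : α → ℕ, ∀ n, {e ∈ E | c e = n}.Infinite := by
  have := hE.to_subtype
  let f : ℕ → α := fun n => Infinite.natEmbedding E n
  have hf : f.Injective := Subtype.val_injective.comp (Infinite.natEmbedding E).injective
  refine ⟨fun e => (f.invFun e).unpair.1, fun n => ?_⟩
  refine (infinite_range_of_injective (f := fun m => f (Nat.pair n m)) fun a b hab => ?_).mono ?_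
  · simpa using hf hab
  · rintro _ ⟨m, rfl⟩
    exact ⟨Subtype.coe_prop _, by simp [Function.leftInverse_invFun hf _]⟩

/-- `K` is essential for infinitely many pairs of opposite faces of the cube, and therefore strongly
infinite-dimensional in the sense of dimension theory. -/
def InfinitelyEssential (K : Set (ι → unitInterval)) : Prop :=
  ∃ E : Set ι, E.Infinite ∧ EssentialOn K E

namespace InfinitelyEssential

lemma nonempty (h : InfinitelyEssential K) : K.Nonempty :=
  let ⟨_, _, hE⟩ := h
  hE.nonempty

lemma exists_isPreconnected_subset (h : InfinitelyEssential K) (hK : IsClosed K) :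
    ∃ M ⊆ K, IsClosed M ∧ IsPreconnected M ∧ InfinitelyEssential M := by
  obtain ⟨E, hE, h⟩ := h
  obtain ⟨M, hMK, hM, hconn, hME⟩ := h.exists_isPreconnected_subset hK
  exact ⟨M, hMK, hM, hconn, E, hE, hME⟩

/-- The directions are split into infinitely many infinite classes; the partitions in the
directions of the class `i + 1` push `K` into `O i`, and the class `0` remains essential. -/
lemma sdiff_or_exists_subset (h : InfinitelyEssential K) (hK : IsClosed K)
    (O : ℕ → Set (ι → unitInterval)) : (∃ i, InfinitelyEssential (K \ O i)) ∨
      ∃ M ⊆ K, IsClosed M ∧ (∀ i, M ⊆ O i) ∧ InfinitelyEssential M := by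
  obtain ⟨E, hE, h⟩ := h
  obtain ⟨c, hc⟩ := exists_forall_infinite_fiber hE
  rw [or_iff_not_imp_left]
  intro hcon
  have hpart (i : ℕ) : ∃ U V : ι → Set (ι → unitInterval), (∀ e, SeparatesFaces e (U e) (V e)) ∧
      K \ O i ⊆ ⋃ e ∈ {e ∈ E | c e = i + 1}, U e ∪ V e := by
    by_contra! hess
    exact hcon ⟨i, _, hc (i + 1), hess⟩
  choose U V hUV hcover using hpart
  let W : Set (ι → unitInterval) := ⋃ e ∈ {e ∈ E | c e ≠ 0}, U (c e - 1) e ∪ V (c e - 1) e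
  have hW : IsOpen W :=
    isOpen_biUnion_separatesFaces (fun e => hUV (c e - 1) e) {e ∈ E | c e ≠ 0}
  refine ⟨K \ W, sdiff_subset, hK.sdiff hW, fun i q hq => ?_, _, hc 0, ?_⟩
  · by_contra hqO
    obtain ⟨e, ⟨heE, hei⟩, hqe⟩ := mem_iUnion₂.1 (hcover i ⟨hq.1, hqO⟩)
    exact hq.2 (mem_iUnion₂.2 ⟨e, ⟨heE, by simp [hei]⟩, by simpa [hei] using hqe⟩)
  · refine (h.sdiff (sep_subset _ _) fun e => hUV (c e - 1) e).mono fun e he => ?_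
    exact ⟨he.1, fun he' => he'.2 he.2⟩

lemma exists_subset_disjoint_of_subsingleton (h : InfinitelyEssential K) (hK : IsClosed K)
    {S : Set (ι → unitInterval)} (hS : (K ∩ S).Subsingleton) :
    ∃ M ⊆ K, IsClosed M ∧ Disjoint M S ∧ InfinitelyEssential M := by
  obtain ⟨E, hE, h⟩ := h
  obtain ⟨e, he⟩ := hE.nonempty
  obtain ⟨t, ht, htS⟩ : ∃ t ∈ Ioo (0 : unitInterval) 1, ∀ q ∈ K ∩ S, q e ≠ t := by
    obtain ⟨t, ht, htS⟩ := (Ioo_infinite zero_lt_one).exists_notMem_finite (hS.image (· e)).finite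
    exact ⟨t, ht, fun q hq hqt => htS ⟨q, hq, hqt⟩⟩
  have hsep (e : ι) := separatesFaces_lt_gt ht e
  refine ⟨_, sdiff_subset, hK.sdiff (isOpen_biUnion_separatesFaces hsep {e}),
    disjoint_left.2 fun q hq hqS => ?_, E \ {e}, hE.sdiff (finite_singleton e),
    h.sdiff (singleton_subset_iff.2 he) hsep⟩
  rcases (htS q ⟨hq.1, hqS⟩).lt_or_gt with hqt | hqt
  · exact hq.2 (mem_iUnion₂.2 ⟨e, rfl, Or.inl hqt⟩)
  · exact hq.2 (mem_iUnion₂.2 ⟨e, rfl, Or.inr hqt⟩)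

end InfinitelyEssential

end EssentialFaces

section ZeroDimensional

open TopologicalSpace

variable {T M : Type*} [TopologicalSpace T] [TopologicalSpace M] {f : T → M}

lemma isTopologicalBasis_isClopen_of_isInducing (hf : Topology.IsInducing f)
    (h : IsTopologicalBasis {C : Set M | IsClopen C}) :
    IsTopologicalBasis {C : Set T | IsClopen C} :=
  (h.isInducing hf).of_isOpen_of_subset (fun _ hC => hC.isOpen)
    (image_subset_iff.2 fun _ hC => hC.preimage hf.continuous)

lemma exists_isClopen_separating [SecondCountableTopology T]
    (hT : IsTopologicalBasis {C : Set T | IsClopen C}) {F G : Set T} (hF : IsClosed F)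
    (hG : IsClosed G) (hFG : Disjoint F G) : ∃ C, IsClopen C ∧ F ⊆ C ∧ Disjoint C G := by
  let small : Set (Set T) := {C | IsClopen C ∧ (Disjoint C F ∨ Disjoint C G)}
  have hsmall (x : T) : ∃ C ∈ small, x ∈ C := by
    by_cases hx : x ∈ F
    · obtain ⟨C, hC, hxC, hCG⟩ := hT.isOpen_iff.1 hG.isOpen_compl x (disjoint_left.1 hFG hx)
      exact ⟨C, ⟨hC, Or.inr (subset_compl_iff_disjoint_right.1 hCG)⟩, hxC⟩
    · obtain ⟨C, hC, hxC, hCF⟩ := hT.isOpen_iff.1 hF.isOpen_compl x hx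
      exact ⟨C, ⟨hC, Or.inl (subset_compl_iff_disjoint_right.1 hCF)⟩, hxC⟩
  have : Nonempty small := ⟨∅, isClopen_empty, Or.inl (empty_disjoint F)⟩
  obtain ⟨B, hB⟩ := isLindelof_univ.indexed_countable_subcover ((↑) : small → Set T)
    (fun C => C.2.1.isOpen) fun x _ => mem_iUnion.2 (by simpa using hsmall x)
  let D : ℕ → Set T := disjointed fun n => B n
  have hD (n : ℕ) : D n ∈ small := disjointedRec
    (fun _ i hC => ⟨hC.1.diff (B i).2.1, hC.2.imp (.mono_left sdiff_subset)
      (.mono_left sdiff_subset)⟩) (B n).2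
  have hcover (x : T) : ∃ n, x ∈ D n := by
    rw [← mem_iUnion, iUnion_disjointed]
    exact hB (mem_univ x)
  let C : Set T := ⋃ n ∈ {n | Disjoint (D n) G}, D n
  have hCcompl : Cᶜ = ⋃ n ∈ {n | ¬ Disjoint (D n) G}, D n := by
    refine IsCompl.compl_eq ⟨?_, codisjoint_iff_le_sup.2 fun x _ => ?_⟩
    · refine disjoint_iUnion₂_left.2 fun m hm => disjoint_iUnion₂_right.2 fun n hn => ?_
      exact disjoint_disjointed _ fun h : m = n => hn (h ▸ hm)
    · obtain ⟨n, hn⟩ := hcover x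
      exact (em (Disjoint (D n) G)).imp (mem_biUnion · hn) (mem_biUnion · hn)
  refine ⟨C, ⟨isOpen_compl_iff.1 ?_, isOpen_biUnion fun n _ => (hD n).1.isOpen⟩, fun x hx => ?_, ?_⟩
  · exact hCcompl ▸ isOpen_biUnion fun n _ => (hD n).1.isOpen
  · obtain ⟨n, hn⟩ := hcover x
    exact mem_biUnion ((hD n).2.resolve_left (not_disjoint_iff.2 ⟨x, hn, hx⟩)) hn
  · exact disjoint_iUnion₂_left.2 fun n hn => hn

lemma separatedNhds_image_of_isClopen [CompletelyNormalSpace M] (hf : Topology.IsInducing f)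
    {C : Set T} (hC : IsClopen C) : SeparatedNhds (f '' C) (f '' Cᶜ) := by
  have hdisj {D : Set T} (hD : IsClosed D) : Disjoint (closure (f '' D)) (f '' Dᶜ) := by
    rw [disjoint_image_right, ← hf.closure_eq_preimage_closure_image, hD.closure_eq]
    exact disjoint_compl_right
  refine separatedNhds_iff_disjoint.2
    (CompletelyNormalSpace.completely_normal (hdisj hC.isClosed) ?_)
  simpa only [compl_compl] using (hdisj hC.compl.isClosed).symm

theorem exists_partition_of_isInducing [CompletelyNormalSpace M] [SecondCountableTopology T]
    (hT : IsTopologicalBasis {C : Set T | IsClopen C}) (hf : Topology.IsInducing f) {A B : Set M}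
    (hA : IsClosed A) (hB : IsClosed B) (hAB : Disjoint A B) :
    ∃ U V, IsOpen U ∧ IsOpen V ∧ Disjoint U V ∧ A ⊆ U ∧ B ⊆ V ∧ range f ⊆ U ∪ V := by
  obtain ⟨U₀, hU₀, hAU₀, hU₀B⟩ :=
    normal_exists_closure_subset hA hB.isOpen_compl hAB.subset_compl_right
  obtain ⟨V₀, hV₀, hBV₀, hV₀U₀⟩ := normal_exists_closure_subset hB
    isClosed_closure.isOpen_compl (subset_compl_comm.1 hU₀B)
  have hdisj : Disjoint (closure U₀) (closure V₀) := subset_compl_iff_disjoint_left.1 hV₀U₀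
  obtain ⟨C, hC, hU₀C, hCV₀⟩ := exists_isClopen_separating hT
    (isClosed_closure.preimage hf.continuous) (isClosed_closure.preimage hf.continuous)
    (hdisj.preimage f)
  obtain ⟨U, V, hU, hV, hCU, hCV, hUV⟩ := separatedNhds_image_of_isClopen hf hC
  have hUV' := disjoint_left.1 hUV
  have hdisj' := disjoint_left.1 hdisj
  refine ⟨U \ closure V₀ ∪ U₀, V \ closure U₀ ∪ V₀, (hU.sdiff isClosed_closure).union hU₀,
    (hV.sdiff isClosed_closure).union hV₀, disjoint_left.2 fun x => ?_,
    hAU₀.trans subset_union_right, hBV₀.trans subset_union_right, ?_⟩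
  · have hxU₀ : x ∈ U₀ → x ∈ closure U₀ := fun hx => subset_closure hx
    have hxV₀ : x ∈ V₀ → x ∈ closure V₀ := fun hx => subset_closure hx
    grind
  · rintro _ ⟨t, rfl⟩
    by_cases ht : t ∈ C
    · exact Or.inl (Or.inl ⟨hCU ⟨t, ht, rfl⟩, disjoint_left.1 hCV₀ ht⟩)
    · exact Or.inr (Or.inl ⟨hCV ⟨t, ht, rfl⟩, fun h => ht (hU₀C h)⟩)

end ZeroDimensional

namespace InfinitelyEssential

variable {ι : Type*} [Countable ι] {K : Set (ι → unitInterval)}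

/-- On a connected subset of all the `U i ∪ V i`, where `U i` and `V i` separate the values of the
`i`-th bit of `p`, the map `p` is constant. -/
lemma exists_subset_disjoint (h : InfinitelyEssential K) (hK : IsClosed K)
    {S : Set (ι → unitInterval)} {p : S → ℕ → Bool} (hp : Continuous p)
    (hinj : Function.Injective p) :
    ∃ M ⊆ K, IsClosed M ∧ Disjoint M S ∧ InfinitelyEssential M := by
  have hclopen (i : ℕ) : IsClopen {x | p x i = true} :=
    (isClopen_discrete {true}).preimage ((continuous_apply i).comp hp)
  choose U V hU hV hpU hpV hUV using fun i =>
    separatedNhds_image_of_isClopen Topology.IsInducing.subtypeVal (hclopen i)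
  have htrue {i : ℕ} {x : S} (hx : p x i = true) : ↑x ∈ U i := hpU i ⟨x, hx, rfl⟩
  have hfalse {i : ℕ} {x : S} (hx : ¬ p x i = true) : ↑x ∈ V i := hpV i ⟨x, hx, rfl⟩
  rcases h.sdiff_or_exists_subset hK fun i => U i ∪ V i with ⟨i, hi⟩ | ⟨M, hMK, hM, hMUV, hMess⟩
  · refine ⟨_, sdiff_subset, hK.sdiff ((hU i).union (hV i)), disjoint_left.2 fun x hx hxS => ?_, hi⟩
    exact hx.2 ((em (p ⟨x, hxS⟩ i = true)).imp htrue hfalse)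
  obtain ⟨N, hNM, hN, hconn, hNess⟩ := hMess.exists_isPreconnected_subset hM
  have hsub : (N ∩ S).Subsingleton := by
    rintro x ⟨hxN, hxS⟩ y ⟨hyN, hyS⟩
    refine congrArg Subtype.val (hinj (funext fun i => ?_) : (⟨x, hxS⟩ : S) = ⟨y, hyS⟩)
    have hdisj := disjoint_left.1 (hUV i)
    rw [Bool.eq_iff_iff]
    rcases hconn.subset_or_subset (hU i) (hV i) (hUV i) (hNM.trans (hMUV i)) with hNU | hNV
    · exact iff_of_true (by_contra fun hx => hdisj (hNU hxN) (hfalse hx))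
        (by_contra fun hy => hdisj (hNU hyN) (hfalse hy))
    · exact iff_of_false (fun hx => hdisj (htrue hx) (hNV hxN))
        fun hy => hdisj (htrue hy) (hNV hyN)
  obtain ⟨L, hLN, hL⟩ := hNess.exists_subset_disjoint_of_subsingleton hN hsub
  exact ⟨L, hLN.trans (hNM.trans hMK), hL⟩

theorem not_subset_iUnion (h : InfinitelyEssential K) (hK : IsClosed K)
    {A : ℕ → Set (ι → unitInterval)} {p : ∀ n, A n → ℕ → Bool} (hp : ∀ n, Continuous (p n))
    (hinj : ∀ n, Function.Injective (p n)) : ¬ K ⊆ ⋃ n, A n := by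
  choose next hsub hclosed hdisj hess using
    fun (n : ℕ) (L : {L : Set (ι → unitInterval) // IsClosed L ∧ InfinitelyEssential L}) =>
      L.2.2.exists_subset_disjoint L.2.1 (hp n) (hinj n)
  let L : ℕ → {L : Set (ι → unitInterval) // IsClosed L ∧ InfinitelyEssential L} :=
    Nat.rec ⟨K, hK, h⟩ fun n L => ⟨next n L, hclosed n L, hess n L⟩
  obtain ⟨q, hq⟩ := IsCompact.nonempty_iInter_of_sequence_nonempty_isCompact_isClosed
    (fun n => (L n).1) (fun n => hsub n (L n)) (fun n => (L n).2.2.nonempty)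
    (L 0).2.1.isCompact (fun n => (L n).2.1)
  rw [mem_iInter] at hq
  intro hcover
  obtain ⟨n, hn⟩ := mem_iUnion.1 (hcover (hq 0))
  exact disjoint_left.1 (hdisj n (L n)) (hq (n + 1)) hn

end InfinitelyEssential

section LexLeast

variable {Y α : Type*} [LinearOrder α]

/-- The points `(y, q)` of `Z` for which `q` is the lexicographically least element of the section
of `Z` over `y`. -/
def lexLeast (Z : Set (Y × (ℕ → α))) : Set (Y × (ℕ → α)) :=
  {z | z ∈ Z ∧ ∀ r, (z.1, r) ∈ Z → toLex z.2 ≤ toLex r}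

lemma injective_fst_lexLeast (Z : Set (Y × (ℕ → α))) :
    Function.Injective fun z : lexLeast Z => (z : Y × (ℕ → α)).1 := by
  rintro ⟨⟨y, q⟩, hq⟩ ⟨⟨y', r⟩, hr⟩ (rfl : y = y')
  obtain rfl : q = r := toLex.injective ((hq.2 r hr.1).antisymm (hr.2 q hq.1))
  rfl

variable [TopologicalSpace α]

/-- Minimize the coordinates one after the other. -/
lemma exists_forall_toLex_le_of_isCompact [OrderClosedTopology α] {K : Set (ℕ → α)}
    (hK : IsCompact K) (hne : K.Nonempty) : ∃ q ∈ K, ∀ r ∈ K, toLex q ≤ toLex r := by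
  let C : ℕ → Set (ℕ → α) := Nat.rec K fun n D => D ∩ ⋂ r ∈ D, {q | q n ≤ r n}
  have hC (n : ℕ) : IsCompact (C n) ∧ (C n).Nonempty := by
    induction n with
    | zero => exact ⟨hK, hne⟩
    | succ n ih =>
      obtain ⟨q, hq, hmin⟩ := ih.1.exists_isMinOn ih.2 (continuous_apply n).continuousOn
      exact ⟨ih.1.inter_right (isClosed_biInter fun r _ =>
        isClosed_le (continuous_apply n) continuous_const), q, hq, mem_iInter₂.2 hmin⟩
  obtain ⟨q, hq⟩ := IsCompact.nonempty_iInter_of_sequence_nonempty_isCompact_isClosed C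
    (fun n => inter_subset_left) (fun n => (hC n).2) hK (fun n => (hC n).1.isClosed)
  rw [mem_iInter] at hq
  have hagree {r : ℕ → α} (hr : r ∈ K) (n : ℕ) (h : ∀ i < n, r i = q i) : r ∈ C n := by
    induction n with
    | zero => exact hr
    | succ n ih =>
      refine ⟨ih fun i hi => h i (hi.trans n.lt_succ_self), ?_⟩
      simpa only [C, mem_iInter₂, mem_ofPred_eq, h n n.lt_succ_self] using (hq (n + 1)).2
  refine ⟨q, hq 0, fun r hr => le_of_not_gt ?_⟩
  rintro ⟨n, hbelow, hlt⟩
  exact hlt.not_ge (mem_iInter₂.1 (hq (n + 1)).2 r (hagree hr n hbelow))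

variable [TopologicalSpace Y]

lemma exists_mem_lexLeast [OrderClosedTopology α] [CompactSpace α] {Z : Set (Y × (ℕ → α))}
    (hZ : IsClosed Z) {y : Y} (h : ∃ q, (y, q) ∈ Z) : ∃ q, (y, q) ∈ lexLeast Z :=
  exists_forall_toLex_le_of_isCompact (hZ.preimage (Continuous.prodMk_right y)).isCompact h

lemma isGδ_compl_image_fst {Q : Type*} [TopologicalSpace Q] [CompactSpace Q]
    [PerfectlyNormalSpace (Y × Q)] {F U : Set (Y × Q)} (hF : IsClosed F) (hU : IsOpen U) :
    IsGδ (Prod.fst '' (F ∩ U))ᶜ := by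
  obtain ⟨O, hO, hUO⟩ := hU.isClosed_compl.isGδ.eq_iInter_nat
  have himage : (Prod.fst '' (F ∩ U))ᶜ = ⋂ n, (Prod.fst '' (F ∩ (O n)ᶜ))ᶜ := by
    rw [← compl_iUnion, ← image_iUnion, ← inter_iUnion, ← compl_iInter, ← hUO, compl_compl]
  rw [himage]
  exact .iInter_of_isOpen fun n =>
    (isClosedMap_fst_of_compactSpace _ (hF.inter (hO n).isClosed_compl)).isOpen_compl

open TopologicalSpace in
lemma isGδ_lexLeast [OrderClosedTopology α] [CompactSpace α] [PseudoMetrizableSpace α]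
    [PseudoMetrizableSpace Y] {Z : Set (Y × (ℕ → α))} (hZ : IsClosed Z) : IsGδ (lexLeast Z) := by
  have hlex : lexLeast Z = Z ∩ ⋂ n, (Prod.fst ''
      ({w : (Y × (ℕ → α)) × (ℕ → α) | (w.1.1, w.2) ∈ Z ∧ ∀ i < n, w.2 i = w.1.2 i} ∩
        {w | w.2 n < w.1.2 n}))ᶜ := by
    ext z
    simp only [lexLeast, mem_ofPred_eq, mem_inter_iff, mem_iInter, mem_compl_iff, mem_image,
      Prod.exists, exists_and_right, exists_eq_right]
    refine and_congr_right fun _ => ⟨fun h n => ?_, fun h r hr => le_of_not_gt ?_⟩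
    · rintro ⟨r, ⟨hr, hbelow⟩, hlt⟩
      exact (h r hr).not_gt ⟨n, hbelow, hlt⟩
    · rintro ⟨n, hbelow, hlt⟩
      exact h n ⟨r, ⟨hr, hbelow⟩, hlt⟩
  rw [hlex]
  refine hZ.isGδ.inter (.iInter fun n => isGδ_compl_image_fst ?_ ?_)
  · simp only [ofPred_and, ofPred_forall]
    exact (hZ.preimage (by fun_prop)).inter
      (isClosed_biInter fun i _ => isClosed_eq (by fun_prop) (by fun_prop))
  · exact isOpen_lt (by fun_prop) (by fun_prop)

lemma polishSpace_of_isGδ {M : Type*} [TopologicalSpace M] [PolishSpace M] {s : Set M}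
    (hs : IsGδ s) : PolishSpace s := by
  obtain ⟨O, hO, rfl⟩ := hs.eq_iInter_nat
  have (n : ℕ) : PolishSpace (O n) := (hO n).polishSpace
  let f : ↥(⋂ n, O n) → ∀ n, O n := fun x n => ⟨x, mem_iInter.1 x.2 n⟩
  have hf : Topology.IsEmbedding f := by
    refine .of_comp (g := fun y => (y 0 : M)) ?_ (by fun_prop) .subtypeVal
    exact continuous_pi fun n => continuous_subtype_val.subtype_mk _
  have hrange : range f = ⋂ n, {y | (y n : M) = y 0} := by
    ext y
    simp only [mem_range, mem_iInter, mem_ofPred_eq]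
    constructor
    · rintro ⟨x, rfl⟩ n
      rfl
    · intro hy
      exact ⟨⟨y 0, mem_iInter.2 fun n => hy n ▸ (y n).2⟩, funext fun n => Subtype.ext (hy n).symm⟩
  refine Topology.IsClosedEmbedding.polishSpace ⟨hf, ?_⟩
  rw [hrange]
  exact isClosed_iInter fun n => isClosed_eq (by fun_prop) (by fun_prop)

end LexLeast

section UniversalClosedSet

open TopologicalSpace

theorem exists_isClosed_universal (M : Type*) [TopologicalSpace M] [SecondCountableTopology M] :
    ∃ Z : Set ((ℕ → Bool) × M), IsClosed Z ∧
      ∀ F : Set M, IsClosed F → ∃ c, ∀ x, (c, x) ∈ Z ↔ x ∈ F := by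
  classical
  obtain ⟨B, hB⟩ := ((countable_countableBasis M).insert ∅).exists_eq_range (insert_nonempty _ _)
  have hbasis : IsTopologicalBasis (range B) := hB ▸ (isBasis_countableBasis M).insert_empty
  refine ⟨⋂ k, ({z | z.1 k = true} ∩ {z | z.2 ∈ B k})ᶜ, isClosed_iInter fun k => ?_, fun F hF =>
    ⟨fun k => decide (Disjoint (B k) F), fun x => ?_⟩⟩
  · have hbit : Continuous fun z : (ℕ → Bool) × M => z.1 k := by fun_prop
    exact (((isOpen_discrete {true}).preimage hbit).inter
      ((hbasis.isOpen ⟨k, rfl⟩).preimage continuous_snd)).isClosed_compl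
  · simp only [mem_iInter, mem_compl_iff, mem_inter_iff, mem_ofPred_eq, decide_eq_true_iff, not_and]
    refine ⟨fun h => by_contra fun hx => ?_, fun hx k hk hxB => disjoint_left.1 hk hxB hx⟩
    obtain ⟨_, ⟨k, rfl⟩, hxB, hBF⟩ := hbasis.isOpen_iff.1 hF.isOpen_compl x hx
    exact h k (subset_compl_iff_disjoint_right.1 hBF) hxB

theorem exists_isClosed_diagonal_universal (Q : Type*) [TopologicalSpace Q]
    [SecondCountableTopology Q] : ∃ Z : Set ((ℕ → Bool) × Q), IsClosed Z ∧
      ∀ F : Set ((ℕ → Bool) × Q), IsClosed F → ∃ c, ∀ q, (c, q) ∈ Z ↔ (c, q) ∈ F := by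
  obtain ⟨Z, hZ, huniv⟩ := exists_isClosed_universal ((ℕ → Bool) × Q)
  refine ⟨{z | (z.1, z) ∈ Z}, hZ.preimage (by fun_prop), fun F hF => ?_⟩
  obtain ⟨c, hc⟩ := huniv F hF
  exact ⟨c, fun q => hc (c, q)⟩

end UniversalClosedSet

section SigmaEmbeddable

open TopologicalSpace

variable {X Y W : Type*} [TopologicalSpace X] [TopologicalSpace Y] [TopologicalSpace W]

lemma sigmaEmbeddable_iff : SigmaEmbeddable X Y ↔
    ∃ A : ℕ → Set X, ⋃ n, A n = univ ∧ ∀ n, ∃ f : A n → Y, Topology.IsEmbedding f := by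
  refine exists_congr fun A => and_congr_right fun _ => forall_congr' fun n => ⟨?_, ?_⟩
  · rintro ⟨B, ⟨e⟩⟩
    exact ⟨_, Topology.IsEmbedding.subtypeVal.comp e.isEmbedding⟩
  · rintro ⟨f, hf⟩
    exact ⟨range f, ⟨hf.toHomeomorph⟩⟩

lemma sigmaEmbeddable_of_countable [Countable X] [Nonempty Y] : SigmaEmbeddable X Y := by
  obtain ⟨f, hf⟩ := exists_injective_nat X
  refine sigmaEmbeddable_iff.2 ⟨fun n => f ⁻¹' {n}, iUnion_eq_univ_iff.2 fun x => ⟨f x, rfl⟩,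
    fun n => ?_⟩
  have : Subsingleton (f ⁻¹' {n}) := (subsingleton_singleton.preimage hf).coe_sort
  exact ⟨fun _ => Classical.arbitrary Y, .of_subsingleton _⟩

lemma exists_isEmbedding_cantor_of_not_sigmaEmbeddable [PolishSpace X] [Nonempty Y]
    (h : ¬ SigmaEmbeddable X Y) : ∃ f : (ℕ → Bool) → X, Topology.IsEmbedding f := by
  have huncountable : ¬ (univ : Set X).Countable := fun hX =>
    have := countable_univ_iff.1 hX
    h sigmaEmbeddable_of_countable
  obtain ⟨f, -, hf, hinj⟩ := isClosed_univ.exists_nat_bool_injection_of_not_countable huncountable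
  exact ⟨f, (hf.isClosedEmbedding hinj).isEmbedding⟩

theorem not_sigmaEmbeddable_cube_of_injective {ι : Type*} [Countable ι] [Infinite ι]
    {p : X → ℕ → Bool} (hp : Continuous p) (hinj : Function.Injective p) :
    ¬ SigmaEmbeddable (ι → unitInterval) X := by
  rw [sigmaEmbeddable_iff]
  rintro ⟨A, hA, h⟩
  choose f hf using h
  have huniv : InfinitelyEssential (univ : Set (ι → unitInterval)) :=
    ⟨univ, infinite_univ, essentialOn_univ⟩
  exact huniv.not_subset_iUnion isClosed_univ (fun n => hp.comp (hf n).continuous)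
    (fun n => hinj.comp (hf n).injective) hA.ge

lemma exists_mem_lexLeast_forall_notMem {Z : Set (Y × (ℕ → unitInterval))} (hZ : IsClosed Z)
    (huniv : ∀ F : Set (Y × (ℕ → unitInterval)), IsClosed F → ∃ c, ∀ q, (c, q) ∈ Z ↔ (c, q) ∈ F)
    {U V : ℕ → Set (Y × (ℕ → unitInterval))} (hU : ∀ n, IsOpen (U n)) (hV : ∀ n, IsOpen (V n))
    (hUV : ∀ n, Disjoint (U n) (V n)) (h₀ : ∀ n, {z | z.2 n = 0} ⊆ U n)
    (h₁ : ∀ n, {z | z.2 n = 1} ⊆ V n) : ∃ z ∈ lexLeast Z, ∀ n, z ∉ U n ∪ V n := by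
  obtain ⟨c, hc⟩ := huniv (⋃ n, U n ∪ V n)ᶜ
    (isOpen_iUnion fun n => (hU n).union (hV n)).isClosed_compl
  have hcont : Continuous (Prod.mk c : (ℕ → unitInterval) → _) := .prodMk_right c
  have hsep (n : ℕ) : SeparatesFaces n (Prod.mk c ⁻¹' U n) (Prod.mk c ⁻¹' V n) :=
    ⟨(hU n).preimage hcont, (hV n).preimage hcont, (hUV n).preimage _, fun _ hq => h₀ n hq,
      fun _ hq => h₁ n hq⟩
  obtain ⟨q, -, hq⟩ := not_subset.1 (essentialOn_univ _ _ hsep)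
  obtain ⟨r, hr⟩ := exists_mem_lexLeast hZ ⟨q, (hc q).2 (by simpa using hq)⟩
  exact ⟨(c, r), hr, by simpa using (hc r).1 hr.1⟩

theorem not_sigmaEmbeddable_lexLeast [PseudoMetrizableSpace Y] [SecondCountableTopology W]
    (hW : IsTopologicalBasis {C : Set W | IsClopen C}) {Z : Set (Y × (ℕ → unitInterval))}
    (hZ : IsClosed Z)
    (huniv : ∀ F : Set (Y × (ℕ → unitInterval)), IsClosed F → ∃ c, ∀ q, (c, q) ∈ Z ↔ (c, q) ∈ F) :
    ¬ SigmaEmbeddable (lexLeast Z) W := by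
  rw [sigmaEmbeddable_iff]
  rintro ⟨A, hA, h⟩
  choose f hf using h
  have hpart (n : ℕ) : ∃ U V : Set (Y × (ℕ → unitInterval)), IsOpen U ∧ IsOpen V ∧ Disjoint U V ∧
      {z | z.2 n = 0} ⊆ U ∧ {z | z.2 n = 1} ⊆ V ∧ (↑) '' A n ⊆ U ∪ V := by
    have := (hf n).isInducing.secondCountableTopology
    have hface (t : unitInterval) : IsClosed {z : Y × (ℕ → unitInterval) | z.2 n = t} :=
      isClosed_eq (by fun_prop) continuous_const
    have hdisj : Disjoint {z : Y × (ℕ → unitInterval) | z.2 n = 0} {z | z.2 n = 1} :=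
      disjoint_left.2 fun z hz₀ hz₁ => zero_ne_one (hz₀.symm.trans hz₁)
    simpa only [range_comp, Subtype.range_coe] using exists_partition_of_isInducing
      (isTopologicalBasis_isClopen_of_isInducing (hf n).isInducing hW)
      (Topology.IsInducing.subtypeVal.comp Topology.IsInducing.subtypeVal) (hface 0) (hface 1) hdisj
  choose U V hU hV hUV h₀ h₁ hAUV using hpart
  obtain ⟨z, hz, hzUV⟩ := exists_mem_lexLeast_forall_notMem hZ huniv hU hV hUV h₀ h₁
  obtain ⟨n, hn⟩ := mem_iUnion.1 (hA ▸ mem_univ (⟨z, hz⟩ : lexLeast Z))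
  exact hzUV n (hAUV n ⟨_, hn, rfl⟩)

end SigmaEmbeddable

theorem stmt0 :
    ∃ (X : Type) (tX : TopologicalSpace X),
      @PolishSpace X tX ∧
      (∃ f : (ℕ → Bool) → X, @Topology.IsEmbedding _ _ _ tX f) ∧
      ¬ @SigmaEmbeddable X (ℕ → Bool) tX _ ∧
      ¬ @SigmaEmbeddable (ℕ → unitInterval) X _ tX := by
  obtain ⟨Z, hZ, huniv⟩ := exists_isClosed_diagonal_universal (ℕ → unitInterval)
  have : PolishSpace ((ℕ → Bool) × (ℕ → unitInterval)) := {}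
  have hPolish : PolishSpace (lexLeast Z) := polishSpace_of_isGδ (isGδ_lexLeast hZ)
  have hCantor : ¬ SigmaEmbeddable (lexLeast Z) (ℕ → Bool) :=
    not_sigmaEmbeddable_lexLeast isTopologicalBasis_isClopen hZ huniv
  have hCube : ¬ SigmaEmbeddable (ℕ → unitInterval) (lexLeast Z) :=
    not_sigmaEmbeddable_cube_of_injective (continuous_fst.comp continuous_subtype_val)
      (injective_fst_lexLeast Z)
  exact ⟨lexLeast Z, inferInstance, hPolish,
    exists_isEmbedding_cantor_of_not_sigmaEmbeddable hCantor, hCantor, hCube⟩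
end

section
/- Every Polish space is σ-homeomorphic to a compact metrizable space: for every Polish space X there exists a compact metrizable topological space K such that X and K are σ-homeomorphic. -/
open Set

/-- `X` and `Y` are σ-homeomorphic: there are countable covers `(A n)` of `X` and `(B n)`
of `Y` such that `A n` (with subspace topology) is homeomorphic to `B n` for every `n`. -/
def SigmaHomeomorphic (X : Type*) (Y : Type*) [TopologicalSpace X] [TopologicalSpace Y] : Prop :=
  ∃ (A : ℕ → Set X) (B : ℕ → Set Y),
    (⋃ n, A n) = univ ∧ (⋃ n, B n) = univ ∧ ∀ n, Nonempty (↥(A n) ≃ₜ ↥(B n))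

/-!
Only the uncountable case is interesting. Embed the Polish space `X` in the Hilbert cube `Q`; its
image `G` is a Gδ set, say `G = ⋂ m, U m` with `U` antitone and open. Cover each `U m` exactly by a
point-finite sequence of open sets of diameter less than `1 / (m + 1)`, choose for every member of
these covers a continuous real function whose cozero set it is, and let `Φ : Q → (ℕ × ℕ → ℝ)`
collect these functions.

* A point of `G` shares its `Φ`-value with no other point of `Q`, because the cozero sets
  containing it are arbitrarily small. As `Φ` is a closed map, it restricts to an embedding of `G`.
* A point outside `G` lies in only finitely many `U m`, so its image has finite support.

So `K = Φ(Q)` consists of a copy of `X` and of finitely supported sequences. Sort the latter by the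
finite set of their irrational coordinates and by the values of the rational ones. Each of the
countably many classes has a countable clopen subbasis, hence embeds in the Cantor space, which in
turn embeds in the uncountable Polish space `X`.
-/

open Filter Function Topology TopologicalSpace

namespace SigmaHomeomorphic

variable {X Y ι : Type*} [TopologicalSpace X] [TopologicalSpace Y]

lemma of_homeomorph (e : X ≃ₜ Y) : SigmaHomeomorphic X Y :=
  ⟨fun _ => univ, fun _ => univ, iUnion_const _, iUnion_const _,
    fun _ => ⟨(Homeomorph.Set.univ X).trans (e.trans (Homeomorph.Set.univ Y).symm)⟩⟩

lemma of_countable_cover [Countable ι] [Nonempty ι] {A : ι → Set X} {B : ι → Set Y}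
    (hA : ⋃ i, A i = univ) (hB : ⋃ i, B i = univ) (hAB : ∀ i, Nonempty (A i ≃ₜ B i)) :
    SigmaHomeomorphic X Y := by
  obtain ⟨s, hs⟩ := exists_surjective_nat ι
  exact ⟨A ∘ s, B ∘ s, (hs.iUnion_comp A).trans hA, (hs.iUnion_comp B).trans hB,
    fun n => hAB (s n)⟩

lemma of_countable [Countable X] [Countable Y] [Nonempty X] [Nonempty Y] :
    SigmaHomeomorphic X Y :=
  of_countable_cover (A := fun p : X × Y => {p.1}) (B := fun p => {p.2})
    (eq_univ_of_forall fun x => mem_iUnion.2 ⟨(x, Classical.arbitrary Y), rfl⟩)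
    (eq_univ_of_forall fun y => mem_iUnion.2 ⟨(Classical.arbitrary X, y), rfl⟩)
    fun _ => ⟨Homeomorph.homeomorphOfUnique _ _⟩

lemma of_isEmbedding_of_cover [Countable ι] {h : X → Y} (hh : IsEmbedding h) {P : ι → Set Y}
    (hP : ∀ i, ∃ g : P i → X, IsEmbedding g) (hcover : range h ∪ ⋃ i, P i = univ) :
    SigmaHomeomorphic X Y := by
  choose g hg using hP
  refine of_countable_cover (ι := Option ι) (A := fun o => o.elim univ fun i => range (g i))
    (B := fun o => o.elim (range h) P) ?_ ?_ ?_
  · simp only [iUnion_option, Option.elim, univ_union]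
  · simpa only [iUnion_option, Option.elim] using hcover
  · rintro (_ | i)
    · exact ⟨(Homeomorph.Set.univ X).trans hh.toHomeomorph⟩
    · exact ⟨(hg i).toHomeomorph.symm⟩

end SigmaHomeomorphic

section CantorSpace

lemma isEmbedding_boolIndicator {X ι : Type*} [t : TopologicalSpace X] [T0Space X]
    {C : ι → Set X} (hC : ∀ i, IsClopen (C i)) (hgen : t = generateFrom (range C)) :
    IsEmbedding fun x i => (C i).boolIndicator x := by
  have hcont : Continuous fun x i => (C i).boolIndicator x :=
    continuous_pi fun i => (continuous_boolIndicator_iff_isClopen _).2 (hC i)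
  refine IsInducing.isEmbedding ⟨le_antisymm hcont.le_induced ?_⟩
  rw [hgen, le_generateFrom_iff_subset_isOpen]
  rintro _ ⟨i, rfl⟩
  exact ⟨eval i ⁻¹' {true}, (isOpen_discrete _).preimage (continuous_apply i),
    preimage_boolIndicator_true (C i)⟩

lemma exists_isEmbedding_nat_bool_of_clopen_subbasis {X : Type*} [t : TopologicalSpace X]
    [T0Space X] {S : Set (Set X)} (hS : S.Countable) (hclopen : ∀ s ∈ S, IsClopen s)
    (hgen : t = generateFrom S) : ∃ f : X → ℕ → Bool, IsEmbedding f := by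
  obtain ⟨C, hC⟩ := (hS.insert univ).exists_eq_range (insert_nonempty _ _)
  have hCclopen : ∀ n, IsClopen (C n) := fun n =>
    forall_mem_insert.2 ⟨isClopen_univ, hclopen⟩ _ (hC ▸ mem_range_self n)
  exact ⟨_, isEmbedding_boolIndicator hCclopen
    (by rw [hgen, ← hC, generateFrom_insert_univ])⟩

lemma exists_isEmbedding_nat_bool_of_uncountable (X : Type*) [TopologicalSpace X] [PolishSpace X]
    [Uncountable X] : ∃ g : (ℕ → Bool) → X, IsEmbedding g := by
  obtain ⟨g, -, hg, hinj⟩ :=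
    isClosed_univ.exists_nat_bool_injection_of_not_countable (not_countable_univ (α := X))
  exact ⟨g, (hg.isClosedEmbedding hinj).isEmbedding⟩

end CantorSpace

lemma isClopen_preimage_of_forall_notMem_frontier {X Y : Type*} [TopologicalSpace X]
    [TopologicalSpace Y] {f : X → Y} (hf : Continuous f) {U : Set Y}
    (hU : ∀ x, f x ∉ frontier U) : IsClopen (f ⁻¹' U) :=
  isClopen_iff_frontier_eq_empty.2 <|
    eq_empty_of_forall_notMem fun x hx => hU x (hf.frontier_preimage_subset U hx)

lemma subtype_pi_eq_generateFrom {I Y : Type*} [t : TopologicalSpace Y]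
    {S : Set (Set Y)} (hS : t = generateFrom S) (P : Set (I → Y)) :
    (inferInstance : TopologicalSpace P) =
      generateFrom (⋃ i, preimage (fun z : P => z.1 i) '' S) := by
  change induced Subtype.val (⨅ i, induced (eval i) t) = _
  simp only [hS, induced_iInf, induced_generateFrom_eq, image_image, generateFrom_iUnion]
  rfl

section IrrationalSlice

variable {I : Type*}

/-- The set of real families whose coordinates in `s` are irrational and whose other coordinates
are those of `q`. With `s` finite and `q` rational and finitely supported, these are the countably
many zero-dimensional pieces into which the finitely supported families are sorted. -/
def irrationalSlice (s : Set I) (q : I → ℝ) : Set (I → ℝ) :=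
  {z | (∀ i ∈ s, Irrational (z i)) ∧ ∀ i ∉ s, z i = q i}

lemma exists_mem_irrationalSlice {z : I → ℝ} (hz : (support z).Finite) :
    ∃ c : Finset I × (I →₀ ℚ), z ∈ irrationalSlice (c.1 : Set I) (fun i => c.2 i) := by
  classical
  let ρ : ℝ → ℚ := invFun (↑)
  have hρ : LeftInverse ρ (↑) := leftInverse_invFun Rat.cast_injective
  have hρz : support (ρ ∘ z) ⊆ support z :=
    support_comp_subset (by simpa only [Rat.cast_zero] using hρ 0) z
  refine ⟨({i ∈ hz.toFinset | Irrational (z i)}, .ofSupportFinite (ρ ∘ z) (hz.subset hρz)),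
    fun i hi => (Finset.mem_filter.1 hi).2, fun i hi => ?_⟩
  have hirr : ¬ Irrational (z i) := fun h =>
    hi (Finset.mem_filter.2 ⟨hz.mem_toFinset.2 h.ne_zero, h⟩)
  obtain ⟨r, hr⟩ := not_not.1 hirr
  change z i = (ρ (z i) : ℝ)
  rw [← hr, hρ r]

lemma isClopen_eval_preimage_irrationalSlice {s : Set I} {q : I → ℝ} (i : I) {U : Set ℝ}
    (hU : frontier U ⊆ range ((↑) : ℚ → ℝ)) :
    IsClopen ((fun z : irrationalSlice s q => z.1 i) ⁻¹' U) := by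
  by_cases hi : i ∈ s
  · exact isClopen_preimage_of_forall_notMem_frontier
      ((continuous_apply i).comp continuous_subtype_val) fun z hz => z.2.1 i hi (hU hz)
  · have hconst : (fun z : irrationalSlice s q => z.1 i) = fun _ => q i :=
      funext fun z => z.2.2 i hi
    rw [hconst]
    by_cases hq : q i ∈ U <;> simp [hq, isClopen_univ, isClopen_empty]

lemma exists_isEmbedding_irrationalSlice_nat_bool [Countable I] (s : Set I) (q : I → ℝ) :
    ∃ f : irrationalSlice s q → ℕ → Bool, IsEmbedding f := by
  refine exists_isEmbedding_nat_bool_of_clopen_subbasis ?_ ?_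
    (subtype_pi_eq_generateFrom
      (Dense.topology_eq_generateFrom Rat.denseRange_cast) (irrationalSlice s q))
  · have hQ : (range ((↑) : ℚ → ℝ)).Countable := countable_range _
    exact countable_iUnion fun i => ((hQ.image _).union (hQ.image _)).image _
  · simp only [mem_iUnion]
    rintro _ ⟨i, _, ⟨_, ⟨r, rfl⟩, rfl⟩ | ⟨_, ⟨r, rfl⟩, rfl⟩, rfl⟩ <;>
      refine isClopen_eval_preimage_irrationalSlice i ?_
    · rw [frontier_Ioi]
      exact singleton_subset_iff.2 ⟨r, rfl⟩
    · rw [frontier_Iio]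
      exact singleton_subset_iff.2 ⟨r, rfl⟩

end IrrationalSlice

section Gdelta

lemma mem_range_of_forall_exists_nhds_dist_lt {X Y : Type*} [PseudoMetricSpace X]
    [CompleteSpace X] [TopologicalSpace Y] [T2Space Y] {e : X → Y} (he : Continuous e) {z : Y}
    (hz : z ∈ closure (range e))
    (hsmall : ∀ ε > 0, ∃ V ∈ 𝓝 z, ∀ a b, e a ∈ V → e b ∈ V → dist a b < ε) : z ∈ range e := by
  have hne : (comap e (𝓝 z)).NeBot :=
    comap_neBot_iff_frequently.2 (mem_closure_iff_frequently.1 hz)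
  have hcauchy : Cauchy (comap e (𝓝 z)) := by
    refine Metric.cauchy_iff.2 ⟨hne, fun ε hε => ?_⟩
    obtain ⟨V, hVz, hV⟩ := hsmall ε hε
    exact ⟨e ⁻¹' V, preimage_mem_comap hVz, fun a ha b hb => hV a b ha hb⟩
  obtain ⟨x, hx⟩ := CompleteSpace.complete hcauchy
  exact ⟨x, tendsto_nhds_unique (he.continuousAt.mono_left hx) tendsto_comap⟩

lemma isGδ_range_of_isInducing {X Y : Type*} [TopologicalSpace X]
    [IsCompletelyPseudoMetrizableSpace X] [TopologicalSpace Y] [T2Space Y] [PerfectlyNormalSpace Y]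
    {e : X → Y} (he : IsInducing e) : IsGδ (range e) := by
  let := upgradeIsCompletelyPseudoMetrizable X
  -- `U m`: the points at which the inverse of `e` oscillates by less than `1 / (m + 1)`.
  let U (m : ℕ) : Set Y :=
    ⋃₀ {V | IsOpen V ∧ ∀ a b, e a ∈ V → e b ∈ V → dist a b < 1 / (m + 1 : ℝ)}
  have hU : ∀ m, IsOpen (U m) := fun m => isOpen_sUnion fun V hV => hV.1
  suffices range e = closure (range e) ∩ ⋂ m, U m by
    rw [this]
    exact isClosed_closure.isGδ.inter (.iInter_of_isOpen hU)
  refine Subset.antisymm (subset_inter subset_closure (subset_iInter fun m => ?_)) ?_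
  · rintro _ ⟨x, rfl⟩
    have hball : Metric.ball x (1 / (m + 1 : ℝ) / 2) ∈ comap e (𝓝 (e x)) :=
      he.nhds_eq_comap x ▸ Metric.ball_mem_nhds _ (by positivity)
    obtain ⟨V, ⟨hxV, hVo⟩, hV⟩ := ((nhds_basis_opens _).comap e).mem_iff.1 hball
    refine ⟨V, ⟨hVo, fun a b ha hb => ?_⟩, hxV⟩
    linarith [dist_triangle_right a b x, Metric.mem_ball.1 (hV ha), Metric.mem_ball.1 (hV hb)]
  · rintro z ⟨hz, hzU⟩
    refine mem_range_of_forall_exists_nhds_dist_lt he.continuous hz fun ε hε => ?_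
    obtain ⟨m, hm⟩ := exists_nat_one_div_lt hε
    obtain ⟨V, ⟨hVo, hV⟩, hzV⟩ := mem_iInter.1 hzU m
    exact ⟨V, hVo.mem_nhds hzV, fun a b ha hb => (hV a b ha hb).trans hm⟩

lemma exists_antitone_isOpen_of_isGδ {Q : Type*} [TopologicalSpace Q] {G : Set Q}
    (hG : IsGδ G) : ∃ U : ℕ → Set Q, (∀ m, IsOpen (U m)) ∧ Antitone U ∧ G = ⋂ m, U m := by
  obtain ⟨U, hU, rfl⟩ := isGδ_iff_eq_iInter_nat.1 hG
  exact ⟨dissipate U, fun m => (finite_Iic m).isOpen_biInter fun k _ => hU k, antitone_dissipate,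
    iInter_dissipate.symm⟩

variable {Q : Type*} [PseudoMetricSpace Q] [SeparableSpace Q] [Nonempty Q]

lemma exists_pointFinite_open_cover_dist_lt {U : Set Q} (hU : IsOpen U) {ε : ℝ} (hε : 0 < ε) :
    ∃ V : ℕ → Set Q, (∀ i, IsOpen (V i)) ∧ ⋃ i, V i = U ∧ (∀ z, {i | z ∈ V i}.Finite) ∧
      ∀ i, ∀ x ∈ V i, ∀ y ∈ V i, dist x y < ε := by
  classical
  let d := denseSeq Q
  have hd (z : Q) : ∃ j, z ∈ Metric.closedBall (d j) (ε / 3) :=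
    ((denseRange_denseSeq Q).exists_dist_lt z (by positivity)).imp fun _ h => h.le
  -- The closed balls removed at stage `i` make the family point-finite without uncovering `z`: it
  -- stays in `V i` for the first `i` with `z ∈ closedBall (d i) (ε / 3) ⊆ ball (d i) (ε / 2)`.
  let V (i : ℕ) : Set Q :=
    (U ∩ Metric.ball (d i) (ε / 2)) \ ⋃ j ∈ Iio i, Metric.closedBall (d j) (ε / 3)
  refine ⟨V, fun i => ?_, Subset.antisymm (iUnion_subset fun i z hz => hz.1.1) fun z hz => ?_,
    fun z => ?_, fun i x hx y hy => ?_⟩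
  · exact (hU.inter Metric.isOpen_ball).sdiff
      ((finite_Iio i).isClosed_biUnion fun j _ => Metric.isClosed_closedBall)
  · refine mem_iUnion.2 ⟨Nat.find (hd z), ⟨hz, ?_⟩, ?_⟩
    · exact Metric.closedBall_subset_ball (by linarith) (Nat.find_spec (hd z))
    · simpa only [mem_iUnion₂, not_exists, mem_Iio] using fun j hj => Nat.find_min (hd z) hj
  · obtain ⟨j, hj⟩ := hd z
    exact (finite_Iic j).subset fun i hi =>
      mem_Iic.2 (not_lt.1 fun hji => hi.2 (mem_biUnion (mem_Iio.2 hji) hj))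
  · linarith [dist_triangle_right x y (d i), Metric.mem_ball.1 hx.1.2, Metric.mem_ball.1 hy.1.2]

lemma exists_open_family_of_isGδ {G : Set Q} (hG : IsGδ G) :
    ∃ V : ℕ × ℕ → Set Q, (∀ p, IsOpen (V p)) ∧ (∀ z ∉ G, {p | z ∈ V p}.Finite) ∧
      ∀ x ∈ G, ∀ ε > 0, ∃ p, x ∈ V p ∧ V p ⊆ Metric.ball x ε := by
  obtain ⟨U, hUo, hUanti, rfl⟩ := exists_antitone_isOpen_of_isGδ hG
  choose V hVo hVU hVfin hVdist using fun m =>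
    exists_pointFinite_open_cover_dist_lt (hUo m) (Nat.one_div_pos_of_nat (α := ℝ) (n := m))
  refine ⟨fun p => V p.1 p.2, fun p => hVo p.1 p.2, fun z hz => ?_, fun x hx ε hε => ?_⟩
  · obtain ⟨m, hm⟩ : ∃ m, z ∉ U m := by simpa only [mem_iInter, not_forall] using hz
    refine ((finite_Iio m).biUnion fun n _ => (hVfin n z).image (Prod.mk n)).subset ?_
    rintro ⟨n, i⟩ hni
    have hzn : z ∈ U n := hVU n ▸ mem_iUnion_of_mem i hni
    exact mem_biUnion (mem_Iio.2 (not_le.1 fun hmn => hm (hUanti hmn hzn))) ⟨i, hni, rfl⟩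
  · obtain ⟨m, hm⟩ := exists_nat_one_div_lt hε
    have hxm : x ∈ ⋃ i, V m i := hVU m ▸ mem_iInter.1 hx m
    obtain ⟨i, hi⟩ := mem_iUnion.1 hxm
    exact ⟨(m, i), hi, fun y hy => (hVdist m i y hy x hi).trans hm⟩

end Gdelta

section FiniteSupport

lemma exists_continuous_mem_support_iff {Q ι : Type*} [TopologicalSpace Q]
    [PerfectlyNormalSpace Q] {V : ι → Set Q} (hV : ∀ p, IsOpen (V p)) :
    ∃ Φ : Q → ι → ℝ, Continuous Φ ∧ ∀ z p, Φ z p ≠ 0 ↔ z ∈ V p := by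
  choose f hf _ using fun p => perfectlyNormalSpace_iff_forall_isClosed_preimage_zero.1 ‹_›
    (V p)ᶜ (hV p).isClosed_compl
  refine ⟨fun z p => f p z, continuous_pi fun p => (f p).continuous, fun z p => ?_⟩
  rw [← notMem_compl_iff, hf p]
  rfl

lemma isEmbedding_restrict_of_isClosedMap {Q Z : Type*} [TopologicalSpace Q]
    [TopologicalSpace Z] {f : Q → Z} (hf : Continuous f) (hclosed : IsClosedMap f) {G : Set Q}
    (hfiber : ∀ x ∈ G, ∀ y, f y = f x → y = x) : IsEmbedding fun x : G => f x := by
  refine ⟨isInducing_iff_nhds.2 fun x => ?_, fun x y hxy => Subtype.ext (hfiber y y.2 x hxy)⟩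
  have hpre : f ⁻¹' {f x} = {x.1} :=
    Subset.antisymm (fun y hy => hfiber x x.2 y hy) (singleton_subset_iff.2 rfl)
  change 𝓝 x = comap (f ∘ Subtype.val) _
  rw [← comap_comap, hclosed.comap_nhds_eq hf, hpre, nhdsSet_singleton, nhds_subtype]

lemma exists_continuous_isEmbedding_finite_support {Q : Type*} [MetricSpace Q] [CompactSpace Q]
    [Nonempty Q] {G : Set Q} (hG : IsGδ G) :
    ∃ Φ : Q → ℕ × ℕ → ℝ, Continuous Φ ∧ IsEmbedding (fun x : G => Φ x) ∧
      ∀ z ∉ G, (support (Φ z)).Finite := by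
  obtain ⟨V, hVo, hVfin, hVsmall⟩ := exists_open_family_of_isGδ hG
  obtain ⟨Φ, hΦ, hΦV⟩ := exists_continuous_mem_support_iff hVo
  have hfiber : ∀ x ∈ G, ∀ y, Φ y = Φ x → y = x := by
    intro x hx y hxy
    refine eq_of_forall_dist_le fun ε hε => ?_
    obtain ⟨p, hxp, hp⟩ := hVsmall x hx ε hε
    have hyp : y ∈ V p := by rwa [← hΦV, hxy, hΦV]
    exact (Metric.mem_ball.1 (hp hyp)).le
  refine ⟨Φ, hΦ, isEmbedding_restrict_of_isClosedMap hΦ hΦ.isClosedMap hfiber, fun z hz => ?_⟩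
  simpa only [support, hΦV] using hVfin z hz

end FiniteSupport

theorem exists_compact_sigmaHomeomorphic_of_uncountable (X : Type*) [TopologicalSpace X]
    [PolishSpace X] [Uncountable X] :
    ∃ K : Set (ℕ × ℕ → ℝ), IsCompact K ∧ SigmaHomeomorphic X K := by
  let := metrizableSpaceMetric X
  obtain ⟨e, he⟩ := Metric.PiNatEmbed.exists_embedding_to_hilbert_cube (X := X)
  let := metrizableSpaceMetric (ℕ → unitInterval)
  obtain ⟨Φ, hΦ, hemb, hfin⟩ :=
    exists_continuous_isEmbedding_finite_support (isGδ_range_of_isInducing he.isInducing)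
  obtain ⟨g, hg⟩ := exists_isEmbedding_nat_bool_of_uncountable X
  have hh : IsEmbedding fun x => (⟨Φ (e x), mem_range_self _⟩ : range Φ) :=
    (hemb.comp he.toHomeomorph.isEmbedding).codRestrict _ _
  refine ⟨range Φ, isCompact_range hΦ, .of_isEmbedding_of_cover hh
    (P := fun c : Finset (ℕ × ℕ) × (ℕ × ℕ →₀ ℚ) =>
      Subtype.val ⁻¹' irrationalSlice (c.1 : Set (ℕ × ℕ)) fun i => c.2 i)
    (fun c => ?_) (eq_univ_of_forall ?_)⟩
  · obtain ⟨f, hf⟩ := exists_isEmbedding_irrationalSlice_nat_bool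
      (c.1 : Set (ℕ × ℕ)) fun i => (c.2 i : ℝ)
    exact ⟨_, hg.comp (hf.comp (IsEmbedding.subtypeVal.restrictPreimage _))⟩
  · rintro ⟨_, z, rfl⟩
    by_cases hz : z ∈ range e
    · obtain ⟨x, rfl⟩ := hz
      exact .inl ⟨x, rfl⟩
    · exact .inr (mem_iUnion.2 (exists_mem_irrationalSlice (hfin z hz)))

/-- Every Polish space is σ-homeomorphic to a compact metrizable space. -/
theorem stmt1 (X : Type*) [TopologicalSpace X] [PolishSpace X] :
    ∃ (K : Type) (tK : TopologicalSpace K),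
      @CompactSpace K tK ∧ @TopologicalSpace.MetrizableSpace K tK ∧
      @SigmaHomeomorphic X K _ tK := by
  rcases isEmpty_or_nonempty X with _ | _
  · exact ⟨Empty, inferInstance, inferInstance, inferInstance, .of_homeomorph .empty⟩
  by_cases hX : Countable X
  · exact ⟨Unit, inferInstance, inferInstance, inferInstance, .of_countable⟩
  rw [not_countable_iff] at hX
  obtain ⟨K, hK, hXK⟩ := exists_compact_sigmaHomeomorphic_of_uncountable X
  exact ⟨K, inferInstance, isCompact_iff_compactSpace.1 hK, inferInstance, hXK⟩
end
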